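/- For every ζ ∈ ℝ^d the identity 2 (a^eff ζ) · ζ = ∫₀¹ ∫_{𝕋^d} ∫_{ℝ^d} a(ξ−η) μ(ξ,η,s) ((η−ξ)·ζ − (χ_ζ(η,s) − χ_ζ(ξ,s)))² dη dξ ds holds, where χ_ζ(ξ,s) = Σ_j ζ_j χ_j(ξ,s). -/

import Mathlib

open MeasureTheory

noncomputable section

/-- The periodicity cell `[0,1)^d`, identified with the torus `𝕋^d`. -/
def cube (d : ℕ) : Set (Fin d → ℝ) := Set.univ.pi fun _ => Set.Ico (0 : ℝ) 1

/-- The operator `A(s)` applied pointwise. -/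
def Aop {d : ℕ} (a : (Fin d → ℝ) → ℝ) (μ : (Fin d → ℝ) → (Fin d → ℝ) → ℝ → ℝ)
    (s : ℝ) (v : (Fin d → ℝ) → ℝ) (ξ : Fin d → ℝ) : ℝ :=
  ∫ η, a (ξ - η) * μ ξ η s * (v η - v ξ)

/-- `β` is a time-periodic solution, in `L²(𝕋^{d+1}) ∩ H¹((0,1); L²(𝕋^d))`, of
`∂_s β - A(s)β = θ` (in the equivalent integrated-in-time formulation). -/
def IsCellSol {d : ℕ} (a : (Fin d → ℝ) → ℝ) (μ : (Fin d → ℝ) → (Fin d → ℝ) → ℝ → ℝ)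
    (θ : (Fin d → ℝ) → ℝ → ℝ) (β : (Fin d → ℝ) → ℝ → ℝ) : Prop :=
  Measurable (fun p : (Fin d → ℝ) × ℝ => β p.1 p.2) ∧
  (∀ ξ s, ∀ k : Fin d → ℤ, β (ξ + fun i => (k i : ℝ)) s = β ξ s) ∧
  (∀ ξ s, β ξ (s + 1) = β ξ s) ∧
  IntegrableOn (fun p : (Fin d → ℝ) × ℝ => (β p.1 p.2) ^ 2)
    (cube d ×ˢ Set.Ioo (0 : ℝ) 1) ∧
  (∀ᵐ ξ ∂(volume : Measure (Fin d → ℝ)), ∀ s ∈ Set.Icc (0 : ℝ) 1,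
    β ξ s = β ξ 0 + ∫ τ in (0 : ℝ)..s, (Aop a μ τ (fun η => β η τ) ξ + θ ξ τ))

/-- The right-hand side of the corrector equation:
`q_j(ξ,s) = -∫_{ℝ^d} a(ξ-η) μ(ξ,η,s)(η_j - ξ_j) dη`. -/
def qfun {d : ℕ} (a : (Fin d → ℝ) → ℝ) (μ : (Fin d → ℝ) → (Fin d → ℝ) → ℝ → ℝ)
    (j : Fin d) (ξ : Fin d → ℝ) (s : ℝ) : ℝ :=
  -∫ η, a (ξ - η) * μ ξ η s * (η j - ξ j)

/-!
Integration against `a(ξ - η) μ(ξ, η, s)` over the jumps `ξ → η` that start in the periodicity cell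
is a symmetric bilinear form `⟨·, ·⟩`. The kernel is symmetric and periodic, so the form is
invariant under the reversal `σ` exchanging `ξ` and `η`: the jumps starting in the cell and those
ending in it are two fundamental domains for the simultaneous translations of both endpoints.

Let `D_i = η_i - ξ_i`, `E_i = χ_i(ξ, s)` and `F_i = D_i - (σE_i - E_i)`. Then `D_i` and `F_i` are
odd under `σ`, and integrating out `η` gives `⟨F_i, E_j⟩ = -∫∫ χ_j ∂_s χ_i`. By periodicity in time,
`⟨F_i, E_j⟩ + ⟨F_j, E_i⟩ = -∫∫ ∂_s (χ_i χ_j) = 0`. With oddness this gives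
`⟨F_i, F_j⟩ = â_ij + â_ji = 2 a^eff_ij`, the polarized form of the identity.
-/

open scoped NNReal ENNReal

section IntegrationByParts

variable {a b : ℝ} {g h u v : ℝ → ℝ}

theorem absolutelyContinuousOnInterval_const_add_integral (hg : IntervalIntegrable g volume a b)
    (c : ℝ) : AbsolutelyContinuousOnInterval (fun s => c + ∫ τ in a..s, g τ) a b :=
  (LipschitzWith.const c).lipschitzOnWith.absolutelyContinuousOnInterval.fun_add
    (hg.absolutelyContinuousOnInterval_intervalIntegral Set.left_mem_uIcc)

theorem ae_deriv_const_add_integral_eq (hg : IntervalIntegrable g volume a b) (c : ℝ) :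
    ∀ᵐ s, s ∈ Set.uIcc a b → deriv (fun s => c + ∫ τ in a..s, g τ) s = g s := by
  filter_upwards [hg.ae_hasDerivAt_integral] with s hs hsab
  exact ((hs hsab a Set.left_mem_uIcc).const_add c).deriv

theorem integral_mul_add_mul_eq_sub_of_eq_integral
    (hg : IntervalIntegrable g volume a b) (hh : IntervalIntegrable h volume a b)
    (hu : ∀ s ∈ Set.uIcc a b, u s = u a + ∫ τ in a..s, g τ)
    (hv : ∀ s ∈ Set.uIcc a b, v s = v a + ∫ τ in a..s, h τ) :
    ∫ s in a..b, (u s * h s + v s * g s) = u b * v b - u a * v a := by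
  have parts := (absolutelyContinuousOnInterval_const_add_integral hg
    (u a)).integral_deriv_mul_eq_sub (absolutelyContinuousOnInterval_const_add_integral hh (v a))
  rw [hu b Set.right_mem_uIcc, hv b Set.right_mem_uIcc]
  refine Eq.trans ?_ (parts.trans (by simp))
  refine intervalIntegral.integral_congr_ae ?_
  filter_upwards [ae_deriv_const_add_integral_eq hg (u a),
    ae_deriv_const_add_integral_eq hh (v a)] with s hgs hhs hs
  have hs' := Set.uIoc_subset_uIcc hs
  rw [hgs hs', hhs hs', ← hu s hs', ← hv s hs']
  ring

end IntegrationByParts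

theorem integral_prod_mul_add_mul_eq_zero {X : Type*} [MeasurableSpace X] {ν : Measure X}
    [SFinite ν] {t₀ t₁ : ℝ} (ht : t₀ ≤ t₁) {u v g h : X × ℝ → ℝ}
    (hg : Integrable g (ν.prod (volume.restrict (Set.Ioo t₀ t₁))))
    (hh : Integrable h (ν.prod (volume.restrict (Set.Ioo t₀ t₁))))
    (huh : Integrable (fun p => u p * h p) (ν.prod (volume.restrict (Set.Ioo t₀ t₁))))
    (hvg : Integrable (fun p => v p * g p) (ν.prod (volume.restrict (Set.Ioo t₀ t₁))))
    (hu : ∀ᵐ x ∂ν, ∀ s ∈ Set.Icc t₀ t₁, u (x, s) = u (x, t₀) + ∫ τ in t₀..s, g (x, τ))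
    (hv : ∀ᵐ x ∂ν, ∀ s ∈ Set.Icc t₀ t₁, v (x, s) = v (x, t₀) + ∫ τ in t₀..s, h (x, τ))
    (hu_per : ∀ x, u (x, t₁) = u (x, t₀)) (hv_per : ∀ x, v (x, t₁) = v (x, t₀)) :
    ∫ p, (u p * h p + v p * g p) ∂ν.prod (volume.restrict (Set.Ioo t₀ t₁)) = 0 := by
  rw [integral_prod _ (huh.fun_add hvg)]
  refine integral_eq_zero_of_ae ?_
  filter_upwards [hu, hv, hg.prod_right_ae, hh.prod_right_ae] with x hux hvx hgx hhx
  rw [← Set.uIcc_of_le ht] at hux hvx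
  rw [← integral_Ioc_eq_integral_Ioo, ← intervalIntegral.integral_of_le ht,
    integral_mul_add_mul_eq_sub_of_eq_integral
      ((intervalIntegrable_iff_integrableOn_Ioo_of_le ht).2 hgx)
      ((intervalIntegrable_iff_integrableOn_Ioo_of_le ht).2 hhx) hux hvx,
    hu_per, hv_per, sub_self, Pi.zero_apply]

theorem isAddFundamentalDomain_map_preimage {X Y : Type*} [AddGroup X] [AddGroup Y]
    [MeasurableSpace X] [MeasurableSpace Y] {L : AddSubgroup X} {D : Set X} {μ : Measure X}
    {ν : Measure Y} (hD : IsAddFundamentalDomain L D μ) {φ : X →+ Y} {p : Y →+ X}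
    (hpφ : Function.LeftInverse p φ) (hp : Measure.QuasiMeasurePreserving p ν μ) :
    IsAddFundamentalDomain (L.map φ) (p ⁻¹' D) ν :=
  hD.preimage_of_equiv hp (L.equivMapOfInjective φ hpφ.injective).bijective fun x y => by
    simp [AddSubgroup.vadd_def, hpφ (x : X)]

section Weighted

variable {α : Type*} [MeasurableSpace α] {m : Measure α} {K f g : α → ℝ}

theorem integrable_mul_of_integrable_withDensity_enorm (hK : Measurable K) (hf : Measurable f)
    (h : Integrable f (m.withDensity fun x => ‖K x‖ₑ)) : Integrable (fun x => K x * f x) m := by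
  rw [integrable_withDensity_iff_integrable_smul' hK.enorm (by simp)] at h
  exact h.congr' (hK.mul hf).aestronglyMeasurable (by simp)

theorem integrable_mul_mul_of_memLp_two (hK : Measurable K) (hf : Measurable f)
    (hg : Measurable g) (hf₂ : MemLp f 2 (m.withDensity fun x => ‖K x‖ₑ))
    (hg₂ : MemLp g 2 (m.withDensity fun x => ‖K x‖ₑ)) :
    Integrable (fun x => K x * (f x * g x)) m :=
  integrable_mul_of_integrable_withDensity_enorm hK (hf.mul hg) (hf₂.integrable_mul hg₂)

theorem memLp_two_withDensity_enorm_iff (hK : Measurable K) (hf : Measurable f) :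
    MemLp f 2 (m.withDensity fun x => ‖K x‖ₑ) ↔ Integrable (fun x => ‖K x‖ * f x ^ 2) m := by
  rw [memLp_two_iff_integrable_sq hf.aestronglyMeasurable,
    integrable_withDensity_iff_integrable_smul' hK.enorm (by simp)]
  simp

end Weighted

/-- The space of triples `((ξ, s), η)`: a jump from `ξ` to `η` at time `s`. -/
abbrev JumpSpace (d : ℕ) : Type := ((Fin d → ℝ) × ℝ) × (Fin d → ℝ)

/-- Invariance of a function of a jump under simultaneous integer translations of both of its
endpoints. -/
def IsDiagPeriodic {d : ℕ} {β : Type*} (f : JumpSpace d → β) : Prop :=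
  ∀ ξ η s, ∀ k : Fin d → ℤ,
    f ((ξ + fun i => (k i : ℝ), s), η + fun i => (k i : ℝ)) = f ((ξ, s), η)

/-- Reversal of a jump, `((ξ, s), η) ↦ ((η, s), ξ)`. -/
def jumpSwap (d : ℕ) : JumpSpace d ≃ᵐ JumpSpace d :=
  MeasurableEquiv.prodComm.trans
    ((MeasurableEquiv.prodCongr (MeasurableEquiv.refl _) MeasurableEquiv.prodComm).trans
      MeasurableEquiv.prodAssoc.symm)

/-- Lebesgue measure on the space-time cell `𝕋^d × (0,1)`. -/
def cellMeasure (d : ℕ) : Measure ((Fin d → ℝ) × ℝ) :=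
  (volume.restrict (cube d)).prod (volume.restrict (Set.Ioo (0 : ℝ) 1))

/-- Lebesgue measure on the jumps that start in the space-time cell and end anywhere in `ℝ^d`. -/
def jumpMeasure (d : ℕ) : Measure (JumpSpace d) := (cellMeasure d).prod volume

/-- Lebesgue measure on all jumps at times in `(0,1)`; `jumpMeasure` restricts the starting point
to the cell. -/
def fullJumpMeasure (d : ℕ) : Measure (JumpSpace d) :=
  (volume.prod (volume.restrict (Set.Ioo (0 : ℝ) 1))).prod volume

/-- The lattice `ℤ^d` in `ℝ^d`. -/
def integerLattice (d : ℕ) : AddSubgroup (Fin d → ℝ) :=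
  (Submodule.span ℤ (Set.range (Pi.basisFun ℝ (Fin d)))).toAddSubgroup

/-- The action of `ℝ^d` on jumps by translation of both endpoints, encoded as a homomorphism into
the additive group of jumps. -/
def diagShift (d : ℕ) : (Fin d → ℝ) →+ JumpSpace d :=
  ((AddMonoidHom.id _).prod 0).prod (AddMonoidHom.id _)

section Jumps

variable {d : ℕ}

instance isFiniteMeasure_cellMeasure : IsFiniteMeasure (cellMeasure d) := by
  have : IsFiniteMeasure (volume.restrict (cube d)) :=
    ⟨by simp [cube, Real.volume_pi_Ico]⟩
  unfold cellMeasure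
  infer_instance

instance sFinite_jumpMeasure : SFinite (jumpMeasure d) := by
  unfold jumpMeasure cellMeasure
  infer_instance

theorem integral_jumpMeasure {f : JumpSpace d → ℝ} (hf : Integrable f (jumpMeasure d)) :
    ∫ z, f z ∂jumpMeasure d =
      ∫ s in Set.Ioo (0 : ℝ) 1, ∫ ξ in cube d, ∫ η, f ((ξ, s), η) := by
  unfold jumpMeasure cellMeasure at *
  rw [integral_prod _ hf, integral_prod_symm _ hf.integral_prod_left]

theorem jumpMeasure_eq_restrict :
    jumpMeasure d = (fullJumpMeasure d).restrict ((fun z => z.1.1) ⁻¹' cube d) := by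
  unfold jumpMeasure cellMeasure fullJumpMeasure
  have : (fun z : JumpSpace d => z.1.1) ⁻¹' cube d = (cube d ×ˢ Set.univ) ×ˢ Set.univ := by
    ext; simp
  rw [this, ← Measure.prod_restrict, ← Measure.prod_restrict, Measure.restrict_univ,
    Measure.restrict_univ]

theorem measurePreserving_jumpSwap :
    MeasurePreserving (jumpSwap d) (fullJumpMeasure d) (fullJumpMeasure d) :=
  (measurePreserving_prodAssoc _ _ _).symm.comp
    (((MeasurePreserving.id volume).prod Measure.measurePreserving_swap).comp
      Measure.measurePreserving_swap)

theorem isAddFundamentalDomain_cube : IsAddFundamentalDomain (integerLattice d) (cube d) := by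
  have h := ZSpan.isAddFundamentalDomain' (Pi.basisFun ℝ (Fin d)) volume
  rwa [ZSpan.fundamentalDomain_pi_basisFun] at h

theorem mem_integerLattice_iff {x : Fin d → ℝ} :
    x ∈ integerLattice d ↔ ∃ k : Fin d → ℤ, (fun i => (k i : ℝ)) = x := by
  simp [integerLattice, Module.Basis.mem_span_iff_repr_mem, funext_iff, Classical.skolem]

theorem IsDiagPeriodic.vadd_eq {β : Type*} {f : JumpSpace d → β} (hf : IsDiagPeriodic f)
    (x : (integerLattice d).map (diagShift d)) (z : JumpSpace d) : f (x +ᵥ z) = f z := by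
  obtain ⟨_, x, hx, rfl⟩ := x
  obtain ⟨k, rfl⟩ := mem_integerLattice_iff.1 hx
  obtain ⟨⟨ξ, s⟩, η⟩ := z
  calc f (diagShift d (fun i => (k i : ℝ)) + ((ξ, s), η))
      = f ((ξ + fun i => (k i : ℝ), s), η + fun i => (k i : ℝ)) := by
        simp [diagShift, add_comm]
    _ = f ((ξ, s), η) := hf ξ η s k

instance countable_map_diagShift : Countable ((integerLattice d).map (diagShift d)) := by
  have : (integerLattice d : Set (Fin d → ℝ)) = Set.range fun k : Fin d → ℤ => fun i => (k i : ℝ) :=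
    Set.ext fun _ => mem_integerLattice_iff
  exact ((this ▸ Set.countable_range _).image (diagShift d)).to_subtype

theorem measurePreserving_diagShift_add (x : Fin d → ℝ) :
    MeasurePreserving (diagShift d x + ·) (fullJumpMeasure d) (fullJumpMeasure d) := by
  have zero_add_time : MeasurePreserving ((0 : ℝ) + ·) (volume.restrict (Set.Ioo (0 : ℝ) 1))
      (volume.restrict (Set.Ioo (0 : ℝ) 1)) := by
    simpa only [zero_add] using! MeasurePreserving.id _
  exact ((measurePreserving_add_left volume x).prod zero_add_time).prod
    (measurePreserving_add_left volume x)

instance vaddInvariantMeasure_fullJumpMeasure :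
    VAddInvariantMeasure ((integerLattice d).map (diagShift d)) (JumpSpace d)
      (fullJumpMeasure d) := by
  refine ⟨?_⟩
  rintro ⟨_, x, -, rfl⟩ t ht
  exact (measurePreserving_diagShift_add x).measure_preimage ht.nullMeasurableSet

theorem isAddFundamentalDomain_start_mem_cube :
    IsAddFundamentalDomain ((integerLattice d).map (diagShift d))
      ((fun z : JumpSpace d => z.1.1) ⁻¹' cube d) (fullJumpMeasure d) :=
  isAddFundamentalDomain_map_preimage isAddFundamentalDomain_cube
    (φ := diagShift d) (p := (AddMonoidHom.fst _ _).comp (AddMonoidHom.fst _ _)) (fun _ => rfl)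
    (Measure.quasiMeasurePreserving_fst.comp Measure.quasiMeasurePreserving_fst)

theorem isAddFundamentalDomain_end_mem_cube :
    IsAddFundamentalDomain ((integerLattice d).map (diagShift d))
      ((fun z : JumpSpace d => z.2) ⁻¹' cube d) (fullJumpMeasure d) :=
  isAddFundamentalDomain_map_preimage isAddFundamentalDomain_cube
    (φ := diagShift d) (p := AddMonoidHom.snd _ _) (fun _ => rfl) Measure.quasiMeasurePreserving_snd

theorem IsDiagPeriodic.integrable_comp_jumpSwap_iff {f : JumpSpace d → ℝ}
    (hf : IsDiagPeriodic f) :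
    Integrable (fun z => f (jumpSwap d z)) (jumpMeasure d) ↔ Integrable f (jumpMeasure d) := by
  rw [jumpMeasure_eq_restrict]
  refine (measurePreserving_jumpSwap.integrableOn_comp_preimage
    (jumpSwap d).measurableEmbedding (s := (fun z => z.2) ⁻¹' cube d)).trans ?_
  exact isAddFundamentalDomain_end_mem_cube.integrableOn_iff
    isAddFundamentalDomain_start_mem_cube hf.vadd_eq

theorem IsDiagPeriodic.integral_comp_jumpSwap {f : JumpSpace d → ℝ} (hf : IsDiagPeriodic f) :
    ∫ z, f (jumpSwap d z) ∂jumpMeasure d = ∫ z, f z ∂jumpMeasure d := by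
  rw [jumpMeasure_eq_restrict]
  refine (measurePreserving_jumpSwap.setIntegral_preimage_emb
    (jumpSwap d).measurableEmbedding f ((fun z => z.2) ⁻¹' cube d)).trans ?_
  exact isAddFundamentalDomain_end_mem_cube.setIntegral_eq
    isAddFundamentalDomain_start_mem_cube hf.vadd_eq

end Jumps

/-- A jump kernel as in nonlocal homogenization: invariant under reversal of the jump, periodic,
and with total mass and second moment bounded uniformly in the starting point and the time. -/
structure IsSymmPeriodicKernel {d : ℕ} (K : JumpSpace d → ℝ) : Prop where
  measurable : Measurable K
  swap : ∀ z, K (jumpSwap d z) = K z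
  periodic : IsDiagPeriodic K
  moment : ∃ C : ℝ≥0, ∀ p, ∫⁻ η, ‖K (p, η)‖ₑ * (1 + ‖η - p.1‖ₑ ^ 2) ≤ C

/-- The measurable diagonally periodic functions of a jump that are square integrable with respect
to `|K|`. Functions are not identified almost everywhere, so that periodicity and reversal are
pointwise notions. -/
def periodicL2 {d : ℕ} (K : JumpSpace d → ℝ) : Submodule ℝ (JumpSpace d → ℝ) where
  carrier := {f | Measurable f ∧ IsDiagPeriodic f ∧
    MemLp f 2 ((jumpMeasure d).withDensity fun z => ‖K z‖ₑ)}
  zero_mem' := ⟨measurable_zero, fun _ _ _ _ => rfl, MemLp.zero⟩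
  add_mem' := fun ⟨hf, hfp, hf₂⟩ ⟨hg, hgp, hg₂⟩ =>
    ⟨hf.add hg, fun ξ η s k => congr_arg₂ (· + ·) (hfp ξ η s k) (hgp ξ η s k), hf₂.add hg₂⟩
  smul_mem' := fun c _ ⟨hf, hfp, hf₂⟩ =>
    ⟨hf.const_smul c, fun ξ η s k => congr_arg (c • ·) (hfp ξ η s k), hf₂.const_smul c⟩

namespace IsSymmPeriodicKernel

variable {d : ℕ} {K : JumpSpace d → ℝ} (hK : IsSymmPeriodicKernel K)

include hK in
theorem integrable_mul_mul (f g : periodicL2 K) :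
    Integrable (fun z => K z * (f.1 z * g.1 z)) (jumpMeasure d) :=
  integrable_mul_mul_of_memLp_two hK.measurable f.2.1 g.2.1 f.2.2.2 g.2.2.2

/-- The symmetric bilinear form `⟨f, g⟩ = ∫₀¹ ∫_{𝕋^d} ∫_{ℝ^d} K f g dη dξ ds`. -/
def form : LinearMap.BilinForm ℝ (periodicL2 K) :=
  LinearMap.mk₂ ℝ (fun f g => ∫ z, K z * (f.1 z * g.1 z) ∂jumpMeasure d)
    (fun f₁ f₂ g => by
      rw [← integral_add (hK.integrable_mul_mul f₁ g) (hK.integrable_mul_mul f₂ g)]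
      simp [add_mul, mul_add])
    (fun c f g => by
      rw [← integral_smul]
      simp [mul_assoc, mul_left_comm])
    (fun f g₁ g₂ => by
      rw [← integral_add (hK.integrable_mul_mul f g₁) (hK.integrable_mul_mul f g₂)]
      simp [mul_add])
    (fun c f g => by
      rw [← integral_smul]
      simp [mul_left_comm])

theorem form_apply (f g : periodicL2 K) :
    hK.form f g = ∫ z, K z * (f.1 z * g.1 z) ∂jumpMeasure d :=
  rfl

theorem isSymm_form : hK.form.IsSymm :=
  ⟨fun f g => by simp only [form_apply, mul_comm (f.1 _)]⟩

include hK in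
theorem comp_jumpSwap_mem_periodicL2 {f : JumpSpace d → ℝ} (hf : f ∈ periodicL2 K) :
    (fun z => f (jumpSwap d z)) ∈ periodicL2 K := by
  obtain ⟨hfm, hfp, hf₂⟩ := hf
  have hswap : Measurable fun z => f (jumpSwap d z) := hfm.comp (jumpSwap d).measurable
  refine ⟨hswap, fun ξ η s k => hfp η ξ s k, ?_⟩
  rw [memLp_two_withDensity_enorm_iff hK.measurable hfm] at hf₂
  rw [memLp_two_withDensity_enorm_iff hK.measurable hswap]
  have hper : IsDiagPeriodic fun z => ‖K z‖ * f z ^ 2 := fun ξ η s k => by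
    simp only [hK.periodic ξ η s k, hfp ξ η s k]
  simpa only [hK.swap] using hper.integrable_comp_jumpSwap_iff.2 hf₂

/-- Reversal of jumps as an operator on functions. -/
def reverse : periodicL2 K →ₗ[ℝ] periodicL2 K :=
  (LinearMap.funLeft ℝ ℝ (jumpSwap d)).restrict fun _ hf => hK.comp_jumpSwap_mem_periodicL2 hf

theorem reverse_reverse (f : periodicL2 K) : hK.reverse (hK.reverse f) = f :=
  rfl

theorem form_reverse_reverse (f g : periodicL2 K) :
    hK.form (hK.reverse f) (hK.reverse g) = hK.form f g := by
  have hper : IsDiagPeriodic fun z => K z * (f.1 z * g.1 z) := fun ξ η s k => by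
    simp only [hK.periodic ξ η s k, f.2.2.1 ξ η s k, g.2.2.1 ξ η s k]
  rw [form_apply, form_apply, ← hper.integral_comp_jumpSwap]
  simp only [hK.swap]
  rfl

include hK in
theorem memLp_two_of_enorm_sq_le {f : JumpSpace d → ℝ} (hf : Measurable f)
    {h : (Fin d → ℝ) × ℝ → ℝ≥0∞} (hh : Measurable h) (hh_fin : ∫⁻ p, h p ∂cellMeasure d < ∞)
    (hle : ∀ z, ‖f z‖ₑ ^ 2 ≤ h z.1 * (1 + ‖z.2 - z.1.1‖ₑ ^ 2)) :
    MemLp f 2 ((jumpMeasure d).withDensity fun z => ‖K z‖ₑ) := by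
  obtain ⟨C, hC⟩ := hK.moment
  have hKm := hK.measurable
  have hKw : ∀ p, Measurable fun η => ‖K (p, η)‖ₑ * (1 + ‖η - p.1‖ₑ ^ 2) := by fun_prop
  rw [memLp_two_withDensity_enorm_iff hKm hf]
  refine ⟨by fun_prop, ?_⟩
  calc ∫⁻ z, ‖‖K z‖ * f z ^ 2‖ₑ ∂jumpMeasure d
      ≤ ∫⁻ z, h z.1 * (‖K z‖ₑ * (1 + ‖z.2 - z.1.1‖ₑ ^ 2)) ∂jumpMeasure d := by
        refine lintegral_mono fun z => ?_
        rw [enorm_mul, enorm_norm, enorm_pow, mul_left_comm]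
        exact mul_le_mul_right (hle z) _
    _ = ∫⁻ p, h p * (∫⁻ η, ‖K (p, η)‖ₑ * (1 + ‖η - p.1‖ₑ ^ 2)) ∂cellMeasure d := by
        rw [jumpMeasure, lintegral_prod _ (by fun_prop)]
        exact lintegral_congr fun p => lintegral_const_mul (h p) (hKw p)
    _ ≤ ∫⁻ p, h p * C ∂cellMeasure d := lintegral_mono fun p => mul_le_mul_right (hC p) _
    _ = (∫⁻ p, h p ∂cellMeasure d) * C := lintegral_mul_const _ hh
    _ < ∞ := ENNReal.mul_lt_top hh_fin ENNReal.coe_lt_top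

/-- The constant function `1`. -/
def one : periodicL2 K :=
  ⟨fun _ => 1, measurable_const, fun _ _ _ _ => rfl,
    hK.memLp_two_of_enorm_sq_le (h := fun _ => 1) measurable_const measurable_const
      (by simp) (by simp)⟩

/-- The `i`-th coordinate `η_i - ξ_i` of a jump. -/
def displacement (i : Fin d) : periodicL2 K :=
  ⟨fun z => z.2 i - z.1.1 i, by fun_prop, fun _ _ _ _ => by simp,
    hK.memLp_two_of_enorm_sq_le (h := fun _ => 1) (by fun_prop) measurable_const
      (by simp) fun z => by
        rw [one_mul]
        refine le_add_of_nonneg_of_le zero_le (pow_le_pow_left' ?_ 2)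
        exact enorm_le_iff_norm_le.2 (norm_le_pi_norm (z.2 - z.1.1) i)⟩

theorem reverse_displacement (i : Fin d) :
    hK.reverse (hK.displacement i) = -hK.displacement i :=
  Subtype.ext <| funext fun _ => (neg_sub _ _).symm

include hK in
theorem integrable_mul (f : periodicL2 K) :
    Integrable (fun z => K z * f.1 z) (jumpMeasure d) := by
  simpa only [one, mul_one] using hK.integrable_mul_mul f hK.one

end IsSymmPeriodicKernel

/-- The jump kernel `a(ξ - η) μ(ξ, η, s)` of the operators `A(s)`. -/
def jumpKernel {d : ℕ} (a : (Fin d → ℝ) → ℝ) (μ : (Fin d → ℝ) → (Fin d → ℝ) → ℝ → ℝ) :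
    JumpSpace d → ℝ :=
  fun z => a (z.1.1 - z.2) * μ z.1.1 z.2 z.1.2

theorem lintegral_enorm_mul_one_add_sq_lt_top {E : Type*} [NormedAddCommGroup E]
    [MeasurableSpace E] {ν : Measure E} {a : E → ℝ}
    (ha : Integrable a ν) (ha₂ : Integrable (fun z => ‖z‖ ^ 2 * a z) ν) :
    ∫⁻ z, ‖a z‖ₑ * (1 + ‖z‖ₑ ^ 2) ∂ν < ∞ := by
  simp_rw [mul_add, mul_one]
  rw [lintegral_add_left' ha.1.enorm]
  refine ENNReal.add_lt_top.2 ⟨ha.2, ?_⟩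
  simpa [HasFiniteIntegral, enorm_mul, mul_comm] using ha₂.2

theorem isSymmPeriodicKernel_jumpKernel {d : ℕ} {a : (Fin d → ℝ) → ℝ}
    {μ : (Fin d → ℝ) → (Fin d → ℝ) → ℝ → ℝ} {M : ℝ} (ha_meas : Measurable a)
    (ha : Integrable a) (ha₂ : Integrable (fun z => ‖z‖ ^ 2 * a z)) (ha_symm : ∀ z, a (-z) = a z)
    (hμ_meas : Measurable fun p : (Fin d → ℝ) × (Fin d → ℝ) × ℝ => μ p.1 p.2.1 p.2.2)
    (hμ_per : ∀ ξ η s, ∀ k : Fin d → ℤ,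
      μ (ξ + fun i => (k i : ℝ)) (η + fun i => (k i : ℝ)) s = μ ξ η s)
    (hμ_symm : ∀ ξ η s, μ ξ η s = μ η ξ s) (hμ_bdd : ∀ ξ η s, ‖μ ξ η s‖ ≤ M) :
    IsSymmPeriodicKernel (jumpKernel a μ) where
  measurable := by
    have : Measurable fun z : JumpSpace d => μ z.1.1 z.2 z.1.2 :=
      hμ_meas.comp (by fun_prop : Measurable fun z : JumpSpace d => (z.1.1, z.2, z.1.2))
    unfold jumpKernel
    fun_prop
  swap := fun z => by
    change a (z.2 - z.1.1) * μ z.2 z.1.1 z.1.2 = a (z.1.1 - z.2) * μ z.1.1 z.2 z.1.2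
    rw [hμ_symm, ← ha_symm, neg_sub]
  periodic := fun ξ η s k => by
    simp only [jumpKernel, hμ_per, add_sub_add_right_eq_sub]
  moment := by
    refine ⟨(‖M‖ₑ * ∫⁻ z, ‖a z‖ₑ * (1 + ‖z‖ₑ ^ 2)).toNNReal, fun p => ?_⟩
    rw [ENNReal.coe_toNNReal (ENNReal.mul_lt_top enorm_lt_top
      (lintegral_enorm_mul_one_add_sq_lt_top ha ha₂)).ne]
    calc ∫⁻ η, ‖jumpKernel a μ (p, η)‖ₑ * (1 + ‖η - p.1‖ₑ ^ 2)
        ≤ ∫⁻ η, ‖M‖ₑ * (‖a (p.1 - η)‖ₑ * (1 + ‖p.1 - η‖ₑ ^ 2)) := by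
          refine lintegral_mono fun η => ?_
          rw [jumpKernel, enorm_mul, mul_comm ‖a _‖ₑ, mul_assoc, enorm_sub_rev η]
          exact mul_le_mul_left
            (enorm_le_iff_norm_le.2 ((hμ_bdd _ _ _).trans (le_abs_self M))) _
      _ = ‖M‖ₑ * ∫⁻ η, ‖a (p.1 - η)‖ₑ * (1 + ‖p.1 - η‖ₑ ^ 2) :=
          lintegral_const_mul _ (by fun_prop)
      _ = ‖M‖ₑ * ∫⁻ z, ‖a z‖ₑ * (1 + ‖z‖ₑ ^ 2) := by
          rw [lintegral_sub_left_eq_self fun z => ‖a z‖ₑ * (1 + ‖z‖ₑ ^ 2)]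

theorem apply_sub_reversal_sub_eq {V : Type*} [AddCommGroup V] [Module ℝ V]
    {B : LinearMap.BilinForm ℝ V} (hB : B.IsSymm) {σ : V →ₗ[ℝ] V} (hσ : ∀ x, σ (σ x) = x)
    (hBσ : ∀ x y, B (σ x) (σ y) = B x y) {x x' y y' : V} (hx : σ x = -x) (hx' : σ x' = -x')
    (h : B (x - (σ y - y)) y' + B (x' - (σ y' - y')) y = 0) :
    B (x - (σ y - y)) (x' - (σ y' - y')) =
      (1 / 2 * B x x' - B x (σ y')) + (1 / 2 * B x' x - B x' (σ y)) := by
  have odd_sub : ∀ {v}, σ v = -v → ∀ w, σ (v - (σ w - w)) = -(v - (σ w - w)) := fun hv w => by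
    rw [map_sub, map_sub, hσ, hv]
    abel
  have apply_of_odd : ∀ {u}, σ u = -u → ∀ w, B u w = -B u (σ w) := fun {u} hu w => by
    rw [← hBσ u w, hu, LinearMap.BilinForm.neg_left]
  have expand : ∀ u v w, B u (v - (σ w - w)) = B u v - (B u (σ w) - B u w) := by
    simp only [LinearMap.BilinForm.sub_right, implies_true]
  set F := x - (σ y - y)
  set F' := x' - (σ y' - y')
  have hFF' : B F F' = B F x' + 2 * B F y' := by
    linarith [expand F x' y', apply_of_odd (odd_sub hx y) y']
  have hF'F : B F' F = B F' x + 2 * B F' y := by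
    linarith [expand F' x y, apply_of_odd (odd_sub hx' y') y]
  have hxF' : B x F' = B x x' - 2 * B x (σ y') := by
    linarith [expand x x' y', apply_of_odd hx y']
  have hx'F : B x' F = B x' x - 2 * B x' (σ y) := by
    linarith [expand x' x y, apply_of_odd hx' y]
  linarith [hB.eq F F', hB.eq F x', hB.eq F' x]

theorem bilinForm_sum_smul_sum_smul {R V ι : Type*} [CommSemiring R] [AddCommMonoid V] [Module R V]
    [Fintype ι] (B : LinearMap.BilinForm R V) (ζ : ι → R) (f : ι → V) :
    B (∑ i, ζ i • f i) (∑ j, ζ j • f j) = ∑ i, ∑ j, ζ i * ζ j * B (f i) (f j) := by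
  simp only [LinearMap.BilinForm.sum_left, LinearMap.BilinForm.sum_right,
    LinearMap.BilinForm.smul_left, LinearMap.BilinForm.smul_right, Finset.mul_sum]
  rw [Finset.sum_comm]
  simp only [mul_assoc, mul_left_comm]

theorem IsSymmPeriodicKernel.integrable_mul_integral {d : ℕ} {K : JumpSpace d → ℝ}
    (hK : IsSymmPeriodicKernel K) (f g : periodicL2 K) {b : (Fin d → ℝ) × ℝ → ℝ}
    (hg : ∀ z, g.1 z = b z.1) :
    Integrable (fun p => b p * ∫ η, K (p, η) * f.1 (p, η)) (cellMeasure d) := by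
  refine (hK.integrable_mul_mul f g).integral_prod_left.congr (.of_forall fun p => ?_)
  simp only [hg, ← mul_assoc, integral_mul_const, mul_comm (b _)]

theorem IsSymmPeriodicKernel.form_eq_integral_mul_integral {d : ℕ} {K : JumpSpace d → ℝ}
    (hK : IsSymmPeriodicKernel K) (f g : periodicL2 K) {b : (Fin d → ℝ) × ℝ → ℝ}
    (hg : ∀ z, g.1 z = b z.1) :
    hK.form f g = ∫ p, b p * (∫ η, K (p, η) * f.1 (p, η)) ∂cellMeasure d := by
  rw [hK.form_apply, jumpMeasure, integral_prod _ (hK.integrable_mul_mul f g)]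
  simp only [hg, ← mul_assoc, integral_mul_const, mul_comm (b _)]

section Corrector

variable {d : ℕ} {a : (Fin d → ℝ) → ℝ} {μ : (Fin d → ℝ) → (Fin d → ℝ) → ℝ → ℝ}
  (hK : IsSymmPeriodicKernel (jumpKernel a μ))

/-- A solution of a cell problem as the function `((ξ, s), η) ↦ β(ξ, s)` of a jump, the value at
its starting point. -/
def IsCellSol.startValue {θ β : (Fin d → ℝ) → ℝ → ℝ} (hβ : IsCellSol a μ θ β) :
    periodicL2 (jumpKernel a μ) :=
  ⟨fun z => β z.1.1 z.1.2, hβ.1.comp measurable_fst, fun ξ _ s k => hβ.2.1 ξ s k,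
    hK.memLp_two_of_enorm_sq_le (h := fun p => ‖β p.1 p.2‖ₑ ^ 2) (hβ.1.comp measurable_fst)
      (hβ.1.enorm.pow_const 2)
      (by simpa [cellMeasure, Measure.prod_restrict, ← Measure.volume_eq_prod, HasFiniteIntegral]
        using hβ.2.2.2.1.2)
      (fun z => le_mul_of_one_le_right' le_self_add)⟩

/-- The jump in the `i`-th corrected coordinate, `(η_i - ξ_i) - (χ_i(η, s) - χ_i(ξ, s))`. -/
def correctedDisplacement {i : Fin d} {β : (Fin d → ℝ) → ℝ → ℝ}
    (hβ : IsCellSol a μ (qfun a μ i) β) : periodicL2 (jumpKernel a μ) :=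
  hK.displacement i - (hK.reverse (hβ.startValue hK) - hβ.startValue hK)

variable {i j : Fin d} {β γ : (Fin d → ℝ) → ℝ → ℝ}

include hK in
theorem ae_Aop_add_qfun_eq (hβ : IsCellSol a μ (qfun a μ i) β) :
    ∀ᵐ p ∂cellMeasure d, Aop a μ p.2 (fun η => β η p.2) p.1 + qfun a μ i p.1 p.2 =
      -∫ η, jumpKernel a μ (p, η) * (correctedDisplacement hK hβ).1 (p, η) := by
  have hD := (hK.integrable_mul (hK.displacement i)).prod_right_ae
  have hE := (hK.integrable_mul
    (hK.reverse (hβ.startValue hK) - hβ.startValue hK)).prod_right_ae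
  filter_upwards [hD, hE] with p hDp hEp
  have hsub := integral_sub hDp hEp
  simp only [← mul_sub] at hsub
  refine Eq.trans ?_ (congr_arg Neg.neg hsub.symm)
  rw [neg_sub, sub_eq_add_neg]
  rfl

include hK in
theorem integrable_Aop_add_qfun (hβ : IsCellSol a μ (qfun a μ i) β) :
    Integrable (fun p => Aop a μ p.2 (fun η => β η p.2) p.1 + qfun a μ i p.1 p.2)
      (cellMeasure d) :=
  (hK.integrable_mul (correctedDisplacement hK hβ)).integral_prod_left.neg.congr
    ((ae_Aop_add_qfun_eq hK hβ).mono fun _ hp => hp.symm)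

include hK in
theorem mul_Aop_add_qfun_ae_eq (hβ : IsCellSol a μ (qfun a μ i) β) (b : (Fin d → ℝ) × ℝ → ℝ) :
    (fun p => b p * (Aop a μ p.2 (fun η => β η p.2) p.1 + qfun a μ i p.1 p.2)) =ᵐ[cellMeasure d]
      fun p => -(b p *
        ∫ η, jumpKernel a μ (p, η) * (correctedDisplacement hK hβ).1 (p, η)) := by
  filter_upwards [ae_Aop_add_qfun_eq hK hβ] with p hp
  rw [hp, mul_neg]

include hK in
theorem integrable_mul_Aop_add_qfun {θ : (Fin d → ℝ) → ℝ → ℝ}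
    (hβ : IsCellSol a μ (qfun a μ i) β) (hγ : IsCellSol a μ θ γ) :
    Integrable (fun p => γ p.1 p.2 *
      (Aop a μ p.2 (fun η => β η p.2) p.1 + qfun a μ i p.1 p.2)) (cellMeasure d) :=
  (hK.integrable_mul_integral (correctedDisplacement hK hβ) (hγ.startValue hK)
    fun _ => rfl).neg.congr (mul_Aop_add_qfun_ae_eq hK hβ _).symm

theorem form_correctedDisplacement_startValue {θ : (Fin d → ℝ) → ℝ → ℝ}
    (hβ : IsCellSol a μ (qfun a μ i) β) (hγ : IsCellSol a μ θ γ) :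
    hK.form (correctedDisplacement hK hβ) (hγ.startValue hK) =
      -∫ p, γ p.1 p.2 * (Aop a μ p.2 (fun η => β η p.2) p.1 + qfun a μ i p.1 p.2)
        ∂cellMeasure d := by
  rw [integral_congr_ae (mul_Aop_add_qfun_ae_eq hK hβ _), integral_neg, neg_neg]
  exact hK.form_eq_integral_mul_integral _ _ fun _ => rfl

theorem form_correctedDisplacement_startValue_add
    (hβ : IsCellSol a μ (qfun a μ i) β) (hγ : IsCellSol a μ (qfun a μ j) γ) :
    hK.form (correctedDisplacement hK hβ) (hγ.startValue hK) +
      hK.form (correctedDisplacement hK hγ) (hβ.startValue hK) = 0 := by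
  have periodic : ∀ {θ δ : (Fin d → ℝ) → ℝ → ℝ}, IsCellSol a μ θ δ → ∀ ξ, δ ξ 1 = δ ξ 0 :=
    fun hδ ξ => by simpa only [zero_add] using hδ.2.2.1 ξ 0
  have hβγ := integrable_mul_Aop_add_qfun hK hγ hβ
  have hγβ := integrable_mul_Aop_add_qfun hK hβ hγ
  have energy := integral_prod_mul_add_mul_eq_zero zero_le_one (integrable_Aop_add_qfun hK hβ)
    (integrable_Aop_add_qfun hK hγ) hβγ hγβ (ae_restrict_of_ae hβ.2.2.2.2)
    (ae_restrict_of_ae hγ.2.2.2.2) (periodic hβ) (periodic hγ)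
  rw [form_correctedDisplacement_startValue, form_correctedDisplacement_startValue, ← neg_add,
    neg_eq_zero, add_comm, ← integral_add hβγ hγβ]
  exact energy

theorem form_correctedDisplacement
    (hβ : IsCellSol a μ (qfun a μ i) β) (hγ : IsCellSol a μ (qfun a μ j) γ) :
    hK.form (correctedDisplacement hK hβ) (correctedDisplacement hK hγ) =
      (1 / 2 * hK.form (hK.displacement i) (hK.displacement j) -
        hK.form (hK.displacement i) (hK.reverse (hγ.startValue hK))) +
      (1 / 2 * hK.form (hK.displacement j) (hK.displacement i) -
        hK.form (hK.displacement j) (hK.reverse (hβ.startValue hK))) :=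
  apply_sub_reversal_sub_eq hK.isSymm_form hK.reverse_reverse hK.form_reverse_reverse
    (hK.reverse_displacement i) (hK.reverse_displacement j)
    (form_correctedDisplacement_startValue_add hK hβ hγ)

theorem form_displacement_sub_reverse_startValue {θ : (Fin d → ℝ) → ℝ → ℝ}
    (hγ : IsCellSol a μ θ γ) (j : Fin d) :
    1 / 2 * hK.form (hK.displacement i) (hK.displacement j) -
        hK.form (hK.displacement i) (hK.reverse (hγ.startValue hK)) =
      ∫ s in Set.Ioo (0 : ℝ) 1, ∫ ξ in cube d, ∫ η, a (ξ - η) * μ ξ η s *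
        ((1 / 2) * (η i - ξ i) * (η j - ξ j) - (η i - ξ i) * γ η s) := by
  have h := integral_jumpMeasure (hK.integrable_mul_mul (hK.displacement i)
    ((1 / 2 : ℝ) • hK.displacement j - hK.reverse (hγ.startValue hK)))
  rw [← hK.form_apply, LinearMap.BilinForm.sub_right, LinearMap.BilinForm.smul_right] at h
  rw [h]
  refine integral_congr_ae (.of_forall fun s => integral_congr_ae (.of_forall fun ξ =>
    integral_congr_ae (.of_forall fun η => ?_)))
  change a (ξ - η) * μ ξ η s * ((η i - ξ i) * (1 / 2 * (η j - ξ j) - γ η s)) =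
    a (ξ - η) * μ ξ η s * ((1 / 2) * (η i - ξ i) * (η j - ξ j) - (η i - ξ i) * γ η s)
  ring

theorem sum_mul_mul_form_correctedDisplacement {χ : Fin d → (Fin d → ℝ) → ℝ → ℝ}
    (hχ : ∀ j, IsCellSol a μ (qfun a μ j) (χ j)) (ζ : Fin d → ℝ) :
    ∑ i, ∑ j, ζ i * ζ j *
        hK.form (correctedDisplacement hK (hχ i)) (correctedDisplacement hK (hχ j)) =
      ∫ s in Set.Ioo (0 : ℝ) 1, ∫ ξ in cube d, ∫ η, a (ξ - η) * μ ξ η s *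
        ((∑ j, (η j - ξ j) * ζ j) - ((∑ j, ζ j * χ j η s) - ∑ j, ζ j * χ j ξ s)) ^ 2 := by
  rw [← bilinForm_sum_smul_sum_smul, hK.form_apply,
    integral_jumpMeasure (hK.integrable_mul_mul _ _)]
  simp only [← pow_two]
  refine integral_congr_ae (.of_forall fun s => integral_congr_ae (.of_forall fun ξ =>
    integral_congr_ae (.of_forall fun η => ?_)))
  have sum_apply : (∑ j, ζ j • correctedDisplacement hK (hχ j)).1 ((ξ, s), η) =
      (∑ j, (η j - ξ j) * ζ j) - ((∑ j, ζ j * χ j η s) - ∑ j, ζ j * χ j ξ s) := by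
    calc _ = ∑ j, ζ j * (correctedDisplacement hK (hχ j)).1 ((ξ, s), η) := by simp
      _ = ∑ j, ζ j * (η j - ξ j - (χ j η s - χ j ξ s)) := rfl
      _ = _ := by simp only [sub_mul, Finset.sum_sub_distrib, mul_comm (ζ _)]
  exact congr_arg (a (ξ - η) * μ ξ η s * · ^ 2) sum_apply

end Corrector

theorem stmt14_general {d : ℕ} {a : (Fin d → ℝ) → ℝ} {μ : (Fin d → ℝ) → (Fin d → ℝ) → ℝ → ℝ}
    (hK : IsSymmPeriodicKernel (jumpKernel a μ)) {χ : Fin d → (Fin d → ℝ) → ℝ → ℝ}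
    (hχ : ∀ j : Fin d, IsCellSol a μ (qfun a μ j) (χ j)) {ahat : Fin d → Fin d → ℝ}
    (hahat : ∀ i j, ahat i j =
      ∫ s in Set.Ioo (0 : ℝ) 1, ∫ ξ in cube d, ∫ η,
        a (ξ - η) * μ ξ η s *
          ((1 / 2) * (η i - ξ i) * (η j - ξ j) - (η i - ξ i) * χ j η s))
    {aeff : Fin d → Fin d → ℝ}
    (haeff : ∀ i j, aeff i j = (1 / 2) * (ahat i j + ahat j i)) (ζ : Fin d → ℝ) :
    2 * (∑ i, (∑ j, aeff i j * ζ j) * ζ i) =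
      ∫ s in Set.Ioo (0 : ℝ) 1, ∫ ξ in cube d, ∫ η,
        a (ξ - η) * μ ξ η s *
          ((∑ j, (η j - ξ j) * ζ j) -
            ((∑ j, ζ j * χ j η s) - (∑ j, ζ j * χ j ξ s))) ^ 2 := by
  have form_eq : ∀ i j, hK.form (correctedDisplacement hK (hχ i))
      (correctedDisplacement hK (hχ j)) = 2 * aeff i j := fun i j => by
    rw [form_correctedDisplacement, form_displacement_sub_reverse_startValue,
      form_displacement_sub_reverse_startValue, ← hahat, ← hahat, haeff]
    ring
  rw [← sum_mul_mul_form_correctedDisplacement hK hχ]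
  simp only [form_eq, Finset.mul_sum, Finset.sum_mul]
  exact Finset.sum_congr rfl fun i _ => Finset.sum_congr rfl fun j _ => by ring

/-- For every `ζ ∈ ℝ^d`,
`2 (a^eff ζ)·ζ = ∫₀¹∫_{𝕋^d}∫_{ℝ^d} a(ξ-η) μ(ξ,η,s) ((η-ξ)·ζ - (χ_ζ(η,s)-χ_ζ(ξ,s)))² dη dξ ds`,
where `χ_ζ = Σ_j ζ_j χ_j`. -/
theorem stmt14 {d : ℕ} (hd : 1 ≤ d)
    (a : (Fin d → ℝ) → ℝ) (μ : (Fin d → ℝ) → (Fin d → ℝ) → ℝ → ℝ) (μm μp : ℝ)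
    (hameas : Measurable a) (hanonneg : ∀ z, 0 ≤ a z)
    (haint : Integrable a) (hamass : ∫ z, a z = 1)
    (hamom : Integrable (fun z => ‖z‖ ^ 2 * a z))
    (hasymm : ∀ z, a (-z) = a z)
    (hμmeas : Measurable fun p : (Fin d → ℝ) × (Fin d → ℝ) × ℝ => μ p.1 p.2.1 p.2.2)
    (hμper₁ : ∀ ξ η s, ∀ k : Fin d → ℤ, μ (ξ + fun i => (k i : ℝ)) η s = μ ξ η s)
    (hμper₂ : ∀ ξ η s, ∀ k : Fin d → ℤ, μ ξ (η + fun i => (k i : ℝ)) s = μ ξ η s)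
    (hμper₃ : ∀ ξ η s, μ ξ η (s + 1) = μ ξ η s)
    (hμsymm : ∀ ξ η s, μ ξ η s = μ η ξ s)
    (hμm : 0 < μm) (hμlb : ∀ ξ η s, μm ≤ μ ξ η s) (hμub : ∀ ξ η s, μ ξ η s ≤ μp)
    (χ : Fin d → (Fin d → ℝ) → ℝ → ℝ)
    (hχ : ∀ j : Fin d, IsCellSol a μ (qfun a μ j) (χ j))
    (hχ0 : ∀ j : Fin d,
      (∫ p in cube d ×ˢ Set.Ioo (0 : ℝ) 1, χ j (Prod.fst p) (Prod.snd p)) = 0)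
    (ahat : Fin d → Fin d → ℝ)
    (hahat : ∀ i j, ahat i j =
      ∫ s in Set.Ioo (0 : ℝ) 1, ∫ ξ in cube d, ∫ η,
        a (ξ - η) * μ ξ η s *
          ((1 / 2) * (η i - ξ i) * (η j - ξ j) - (η i - ξ i) * χ j η s))
    (aeff : Fin d → Fin d → ℝ)
    (haeff : ∀ i j, aeff i j = (1 / 2) * (ahat i j + ahat j i)) :
    ∀ ζ : Fin d → ℝ,
      2 * (∑ i, (∑ j, aeff i j * ζ j) * ζ i) =
        ∫ s in Set.Ioo (0 : ℝ) 1, ∫ ξ in cube d, ∫ η,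
          a (ξ - η) * μ ξ η s *
            ((∑ j, (η j - ξ j) * ζ j) -
              ((∑ j, ζ j * χ j η s) - (∑ j, ζ j * χ j ξ s))) ^ 2 := by
  have hK : IsSymmPeriodicKernel (jumpKernel a μ) :=
    isSymmPeriodicKernel_jumpKernel hameas haint hamom hasymm hμmeas
      (fun ξ η s k => by rw [hμper₁, hμper₂]) hμsymm
      fun ξ η s => (abs_of_pos (hμm.trans_le (hμlb ξ η s))).trans_le (hμub ξ η s)
  exact stmt14_general hK hχ hahat haeff
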